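/- For every n ≡ 3, 4, 5, 6, or 7 (mod 8) and every c ∈ ℚ₂, the discriminant disc(H_n + c·H_{n−1}) of the quasi-Hermite polynomial is not a square in ℚ₂. -/

import Mathlib

open Polynomial

/-- The resultant over an algebraically closed field:
`Res f g = lc(f)^(deg g) * ∏_{α root of f} g(α)`. -/
noncomputable def Res {K : Type*} [Field K] (f g : Polynomial K) : K :=
  f.leadingCoeff ^ g.natDegree * (f.roots.map (fun a => g.eval a)).prod

/-- The discriminant of a polynomial over an algebraically closed field. -/
noncomputable def disc {K : Type*} [Field K] (f : Polynomial K) : K :=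
  (-1) ^ (f.natDegree * (f.natDegree - 1) / 2) / f.leadingCoeff * Res f (derivative f)

/-- The physicists' Hermite polynomials, with coefficients in `ℚ_[2]`. -/
noncomputable def H : ℕ → Polynomial ℚ_[2]
  | 0 => 1
  | 1 => 2 * X
  | (n + 2) => 2 * X * H (n + 1) - C (2 * (n + 1 : ℚ_[2])) * H n

local notation "K" => AlgebraicClosure ℚ_[2]


lemma H_coeff (n : ℕ) : (H n).natDegree ≤ n ∧ (H n).coeff n = 2 ^ n := by
  induction n using Nat.strong_induction_on with
  | _ n ih =>
    match n with
    | 0 => simp [H]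
    | 1 =>
      have e : H 1 = C 2 * X := by simp [H, C_ofNat]
      rw [e]
      exact ⟨(natDegree_C_mul_le _ _).trans natDegree_X_le, by simp⟩
    | (k + 2) =>
      obtain ⟨h1, h2⟩ := ih (k + 1) (by omega)
      obtain ⟨h3, h4⟩ := ih k (by omega)
      have e : H (k + 2) = C 2 * (X * H (k + 1)) - C (2 * (k + 1 : ℚ_[2])) * H k := by
        simp only [H]
        rw [← mul_assoc, C_ofNat]
      rw [e]
      constructor
      · refine (natDegree_sub_le _ _).trans (max_le ?_ ?_)
        · refine (natDegree_C_mul_le _ _).trans (natDegree_mul_le.trans ?_)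
          rw [natDegree_X]; omega
        · refine (natDegree_C_mul_le _ _).trans (by omega)
      · rw [coeff_sub, coeff_C_mul, coeff_C_mul, coeff_X_mul, h2,
          coeff_eq_zero_of_natDegree_lt (lt_of_le_of_lt h3 (by omega))]
        ring

lemma H_succ_succ (k : ℕ) :
    H (k + 2) = 2 * X * H (k + 1) - C (2 * (k + 1 : ℚ_[2])) * H k := by
  simp only [H]

lemma H_deriv (n : ℕ) : derivative (H (n + 1)) = C (2 * (n + 1 : ℚ_[2])) * H n := by
  induction n using Nat.strong_induction_on with
  | _ n ih =>
    match n with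
    | 0 => simp [H, C_ofNat]
    | 1 =>
      simp only [H]
      simp [derivative_mul]
      simp only [← C_ofNat, ← C_mul, ← C_1, ← C_add]
      ring_nf
      simp only [← C_ofNat, ← C_mul, ← C_1, ← C_add, ← C_pow]
      ring_nf
    | (k + 2) =>
      have h1 := ih (k + 1) (by omega)
      have h3 := ih k (by omega)
      rw [H_succ_succ (k + 1), derivative_sub, derivative_mul, derivative_C_mul, h1, h3]
      rw [H_succ_succ k]
      have e2 : derivative (2 * X : ℚ_[2][X]) = 2 := by
        simp [derivative_mul]
      rw [e2]
      push_cast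
      simp only [map_mul, map_add, map_natCast, map_one, C_ofNat]
      ring

lemma res_step (n : ℕ) :
    resultant (H (n + 2)) (H (n + 1)) (n + 2) (n + 1) =
      (-(8 * (n + 1 : ℚ_[2]))) ^ (n + 1) * resultant (H (n + 1)) (H n) (n + 1) n := by
  have e : H (n + 2) = C (-(2 * (n + 1 : ℚ_[2]))) * H n + H (n + 1) * (C 2 * X) := by
    rw [H_succ_succ, map_neg, C_ofNat]; ring
  rw [e, resultant_add_mul_left _ _ _ _ _ _ (H_coeff (n + 1)).1, resultant_C_mul_left,
    resultant_add_left_deg (H n) (H (n + 1)) n (n + 1) 2 (H_coeff n).1, resultant_comm (H n), (H_coeff (n + 1)).2]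
  · have h1 : (-1 : ℚ_[2]) ^ ((n + 1) * 2) = 1 := by rw [mul_comm, pow_mul]; simp
    have h2 : (-1 : ℚ_[2]) ^ (n * (n + 1)) = 1 := (Nat.even_mul_succ_self n).neg_one_pow
    rw [h1, h2, ← pow_mul, mul_comm (n + 1) 2, pow_mul]
    rw [one_mul, one_mul, ← mul_assoc, ← mul_pow]
    congr 2; ring
  · have := (natDegree_C_mul_le (2 : ℚ_[2]) X).trans natDegree_X_le
    omega

/-- `∏_{k<n} (8k)^k`. -/
def EE (n : ℕ) : ℕ := ∏ k ∈ Finset.range n, (8 * k) ^ k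

lemma EE_succ (n : ℕ) : EE (n + 1) = EE n * (8 * n) ^ n := Finset.prod_range_succ _ _

lemma res_formula (n : ℕ) :
    resultant (H (n + 1)) (H n) (n + 1) n = (-1) ^ ((n + 1) * n / 2) * (EE (n + 1) : ℚ_[2]) := by
  induction n with
  | zero => 
    have e : H 0 = C 1 := by simp [H]
    rw [e, resultant_C_right]; simp [EE]
  | succ n ih =>
    have a : (n + 1 + 1) * (n + 1) / 2 = (n + 1) * n / 2 + (n + 1) := by
      rw [show (n + 1 + 1) * (n + 1) = (n + 1) * n + (n + 1) * 2 by ring,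
        Nat.add_mul_div_right _ _ (by norm_num)]
    rw [show n + 1 + 1 = n + 2 from rfl, res_step, ih, a, EE_succ (n + 1), neg_pow, pow_add]
    push_cast
    ring

/-- homogenised Hermite polynomials -/
def BB {R : Type*} [CommRing R] (v w : R) : ℕ → R
  | 0 => 1
  | 1 => v
  | (m + 2) => v * BB v w (m + 1) - (m + 1) * w * BB v w m

lemma BB_eval (v c w : ℚ_[2]) (hc : c ≠ 0) (hw : c ^ 2 = 2 * w) (m : ℕ) :
    (-c) ^ m * (H m).eval (-v / c) = 2 ^ m * BB v w m := by
  induction m using Nat.strong_induction_on with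
  | _ n ih =>
    match n with
    | 0 => simp [H, BB]
    | 1 => simp [H, BB]; field_simp
    | (k + 2) =>
      have h1 := ih (k + 1) (by omega)
      have h3 := ih k (by omega)
      rw [H_succ_succ]
      simp only [BB, eval_sub, eval_mul, eval_C, eval_X, eval_ofNat]
      have : (-c) ^ (k + 2) * (2 * (-v / c) * eval (-v / c) (H (k + 1)) -
          2 * (k + 1) * eval (-v / c) (H k)) = 2 * v * ((-c) ^ (k + 1) * eval (-v / c) (H (k + 1)))
          - 2 * (k + 1) * c ^ 2 * ((-c) ^ k * eval (-v / c) (H k)) := by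
        field_simp
        ring
      rw [this, h1, h3, hw]
      ring

/-- the quasi-Hermite factor -/
noncomputable def TT (n : ℕ) (w : ℚ_[2]) : ℚ_[2] := BB (n + w) w n - w * BB (n + w) w (n - 1)

lemma disc_formula (n : ℕ) (hn : 2 ≤ n) (c w : ℚ_[2]) (hw : c ^ 2 = 2 * w) :
    disc ((H n + C c * H (n - 1)).map (algebraMap ℚ_[2] K)) =
      algebraMap ℚ_[2] K ((EE n : ℚ_[2]) * TT n w) := by
  obtain ⟨m, rfl⟩ : ∃ m, n = m + 2 := ⟨n - 2, by omega⟩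
  rw [show m + 2 - 1 = m + 1 by omega]
  set f := H (m + 2) + C c * H (m + 1) with hf
  set φ := algebraMap ℚ_[2] K with hφ
  have hinj : Function.Injective φ := φ.injective
  have hfc : f.coeff (m + 2) = 2 ^ (m + 2) := by
    rw [hf, coeff_add, coeff_C_mul, (H_coeff (m + 2)).2,
      coeff_eq_zero_of_natDegree_lt (lt_of_le_of_lt (H_coeff (m + 1)).1 (by omega))]
    ring
  have hfd : f.natDegree = m + 2 := by
    apply natDegree_eq_of_le_of_coeff_ne_zero
    · refine (natDegree_add_le _ _).trans (max_le (H_coeff _).1 ?_)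
      exact (natDegree_C_mul_le _ _).trans ((H_coeff _).1.trans (by omega))
    · rw [hfc]; exact pow_ne_zero _ two_ne_zero
  have hfl : f.leadingCoeff = 2 ^ (m + 2) := by rw [leadingCoeff, hfd, hfc]
  set F := f.map φ with hF
  have hFd : F.natDegree = m + 2 := by rw [hF, natDegree_map, hfd]
  have hFl : F.leadingCoeff = φ (2 ^ (m + 2)) := by rw [hF, leadingCoeff_map, hfl]
  have hFs : F.Splits := IsAlgClosed.splits F
  have hFdd : (derivative F).natDegree = m + 1 := by
    rw [natDegree_derivative, hFd]; rfl
  -- the derivative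
  have hder : derivative f = H (m + 1) * (C (2 * (m + 2) + c ^ 2) + C (2 * c) * X) - C c * f := by
    rw [hf, derivative_add, derivative_C_mul, H_deriv (m + 1), H_deriv m, H_succ_succ m]
    push_cast
    simp only [map_mul, map_add, map_natCast, map_one, map_ofNat, map_pow]
    ring
  have hroot : (F.roots.map (fun a => (derivative F).eval a)).prod =
      (F.roots.map (fun a => ((H (m + 1)).map φ).eval a)).prod *
      (F.roots.map (fun a => φ (2 * (m + 2) + c ^ 2) + φ (2 * c) * a)).prod := by
    rw [← Multiset.prod_map_mul]
    congr 1
    apply Multiset.map_congr rfl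
    intro a ha
    have h0 : F.eval a = 0 := (mem_roots'.1 ha).2
    rw [hF, derivative_map, hder]
    simp only [Polynomial.map_sub, Polynomial.map_mul, Polynomial.map_add, map_C, map_X, eval_sub,
      eval_mul, eval_add, eval_C, eval_X]
    rw [← hF, h0]
    ring
  have hres : F.leadingCoeff ^ (m + 1) *
      (F.roots.map (fun a => ((H (m + 1)).map φ).eval a)).prod =
      φ ((-1) ^ ((m + 2) * (m + 1) / 2) * (EE (m + 2) : ℚ_[2])) := by
    rw [← resultant_eq_prod_eval F ((H (m + 1)).map φ) (m + 1)
      (by rw [natDegree_map]; exact (H_coeff _).1) hFs, hFd, hF, resultant_map_map]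
    congr 1
    rw [hf, mul_comm (C c), resultant_add_mul_left _ _ _ _ _ (by simp) (H_coeff _).1,
      res_formula]
  have hTT : (F.roots.map (fun a => φ (2 * (m + 2) + c ^ 2) + φ (2 * c) * a)).prod =
      φ (2 ^ (m + 2) * TT (m + 2) w) := by
    have hcard : F.roots.card = m + 2 := by rw [← hFs.natDegree_eq_card_roots, hFd]
    by_cases hc : c = 0
    · have hw0 : w = 0 := by simpa [hc] using hw
      have hB : ∀ (v : ℚ_[2]) k, BB v 0 k = v ^ k := by
        intro v k
        induction k using Nat.strong_induction_on with
        | _ k ih =>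
          match k with
          | 0 => simp [BB]
          | 1 => simp [BB]
          | (k + 2) => simp [BB, ih (k + 1) (by omega)]; ring
      simp only [hc, hw0, TT, hB]
      simp [hcard]
      rw [← mul_pow]; ring
    · have hsplit := hFs.eval_eq_prod_roots (φ (-((m + 2 : ℕ) + w) / c))
      have e1 : (F.roots.map (fun a => φ (2 * (m + 2) + c ^ 2) + φ (2 * c) * a)).prod =
          φ (-(2 * c)) ^ (m + 2) * (F.roots.map (fun a => φ (-((m + 2 : ℕ) + w) / c) - a)).prod := by
        rw [show φ (-(2 * c)) ^ (m + 2) = (Multiset.replicate F.roots.card (φ (-(2 * c)))).prod by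
          rw [Multiset.prod_replicate, hcard], ← Multiset.map_const', ← Multiset.prod_map_mul]
        congr 1
        apply Multiset.map_congr rfl
        intro a _
        rw [mul_sub, ← map_mul, hw, map_neg]
        have : -(2 * c) * (-((m + 2 : ℕ) + w) / c) = 2 * (m + 2) + 2 * w := by
          field_simp
          push_cast; ring
        rw [this]; ring
      rw [e1]
      have e2 : φ (2 ^ (m + 2)) * (F.roots.map (fun a => φ (-((m + 2 : ℕ) + w) / c) - a)).prod
          = φ (f.eval (-((m + 2 : ℕ) + w) / c)) := by
        rw [← hFl, ← hsplit, hF, eval_map, eval₂_at_apply]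
      have e3 : φ (-(2 * c)) ^ (m + 2) = φ ((-c) ^ (m + 2)) * φ (2 ^ (m + 2)) := by
        rw [← map_pow, ← map_mul, ← mul_pow]; congr 2; ring
      rw [e3, mul_assoc, e2, ← map_mul]
      congr 1
      have b1 := BB_eval ((m + 2 : ℕ) + w) c w hc hw (m + 2)
      have b2 := BB_eval ((m + 2 : ℕ) + w) c w hc hw (m + 1)
      rw [hf, eval_add, eval_mul, eval_C, mul_add, b1, TT]
      have : (-c) ^ (m + 2) * (c * eval (-((m + 2 : ℕ) + w) / c) (H (m + 1))) =
        - c ^ 2 * ((-c) ^ (m + 1) * eval (-((m + 2 : ℕ) + w) / c) (H (m + 1))) := by ring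
      rw [this, b2, hw, show m + 2 - 1 = m + 1 by omega]
      ring
  rw [disc, Res, hFdd, hFd, hroot, hTT, ← mul_assoc (_ ^ (m + 1)), hres, hFl,
    show m + 2 - 1 = m + 1 by omega]
  have hs : ((-1 : ℚ_[2]) ^ ((m + 2) * (m + 1) / 2)) * (-1 : ℚ_[2]) ^ ((m + 2) * (m + 1) / 2) = 1 := by
    rw [← mul_pow]; simp
  have h2 : (2 : ℚ_[2]) ^ (m + 2) ≠ 0 := pow_ne_zero _ two_ne_zero
  have : ((-1 : K) ^ ((m + 2) * (m + 1) / 2)) = φ ((-1) ^ ((m + 2) * (m + 1) / 2)) := by simp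
  rw [this, ← map_div₀, ← map_mul, ← map_mul]
  congr 1
  field_simp
  linear_combination (EE (m + 2) * TT (m + 2) w) * hs

/-! ### Generic facts on `BB` -/

lemma BB_map {R S : Type*} [CommRing R] [CommRing S] (ψ : R →+* S) (v w : R) (m : ℕ) :
    ψ (BB v w m) = BB (ψ v) (ψ w) m := by
  induction m using Nat.strong_induction_on with
  | _ n ih =>
    match n with
    | 0 => simp [BB]
    | 1 => simp [BB]
    | (k + 2) => simp [BB, ih (k + 1) (by omega), ih k (by omega)]

lemma BB_hom {R : Type*} [CommRing R] (l v w : R) (m : ℕ) :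
    BB (l * v) (l ^ 2 * w) m = l ^ m * BB v w m := by
  induction m using Nat.strong_induction_on with
  | _ n ih =>
    match n with
    | 0 => simp [BB]
    | 1 => simp [BB]
    | (k + 2) =>
      simp only [BB, ih (k + 1) (by omega), ih k (by omega)]
      ring

lemma BB_four (v w : ZMod 4) (k : ℕ) :
    BB v w (4 * k + 2) = v * BB v w (4 * k + 1) - w * BB v w (4 * k) ∧
    BB v w (4 * k + 3) = v * BB v w (4 * k + 2) - 2 * w * BB v w (4 * k + 1) ∧
    BB v w (4 * k + 4) = v * BB v w (4 * k + 3) - 3 * w * BB v w (4 * k + 2) ∧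
    BB v w (4 * k + 5) = v * BB v w (4 * k + 4) := by
  have h4 : (4 : ZMod 4) = 0 := rfl
  have a2 : BB v w (4 * k + 2) = v * BB v w (4 * k + 1) - ((4 * k : ℕ) + 1) * w * BB v w (4 * k) :=
    by rw [BB]
  have a3 : BB v w (4 * k + 3) =
    v * BB v w (4 * k + 2) - ((4 * k + 1 : ℕ) + 1) * w * BB v w (4 * k + 1) := by rw [BB]
  have a4 : BB v w (4 * k + 4) =
    v * BB v w (4 * k + 3) - ((4 * k + 2 : ℕ) + 1) * w * BB v w (4 * k + 2) := by rw [BB]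
  have a5 : BB v w (4 * k + 5) =
    v * BB v w (4 * k + 4) - ((4 * k + 3 : ℕ) + 1) * w * BB v w (4 * k + 3) := by rw [BB]
  push_cast at a2 a3 a4 a5
  rw [h4] at a2 a3 a4 a5
  refine ⟨?_, ?_, ?_, ?_⟩
  · rw [a2]; ring
  · rw [a3]; ring
  · rw [a4]; ring
  · rw [a5]
    linear_combination (-w * BB v w (4 * k + 3)) * h4

lemma BB_per (N z : ZMod 4) (hz : z = 0 ∨ z = 2) (k : ℕ) :
    BB (1 + N * z) z (4 * k) = 1 ∧ BB (1 + N * z) z (4 * k + 1) = 1 + N * z := by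
  induction k with
  | zero => simp [BB]
  | succ k ih =>
    obtain ⟨h0, h1⟩ := ih
    obtain ⟨h2, h3, h4, h5⟩ := BB_four (1 + N * z) z k
    rw [show 4 * (k + 1) = 4 * k + 4 by ring, show 4 * k + 4 + 1 = 4 * k + 5 by ring, h5, h4, h3, h2,
      h1, h0]
    clear h0 h1 h2 h3 h4 h5
    rcases hz with rfl | rfl <;> revert N <;> decide

lemma regI4 (m : ℕ) (z : ZMod 4) (hz : z = 0 ∨ z = 2) (N a : ZMod 4) (hN : N = m + 2)
    (ha : a = N * BB (1 + N * z) z (m + 1) - (N - 1) * BB (1 + N * z) z m) :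
    a = 1 ∨ (a = 3 ∧ (m + 2) % 4 ≠ 1 ∧ (m + 2) % 4 ≠ 2) := by
  obtain ⟨k, r, hr, rfl⟩ : ∃ k r, r < 4 ∧ m = 4 * k + r :=
    ⟨m / 4, m % 4, Nat.mod_lt _ (by norm_num), (Nat.div_add_mod _ _).symm⟩
  obtain ⟨h0, h1⟩ := BB_per N z hz k
  obtain ⟨h2, h3, h4, h5⟩ := BB_four (1 + N * z) z k
  have e : (((4 * k + r : ℕ)) : ZMod 4) = r := by
    push_cast; rw [show (4 : ZMod 4) = 0 from rfl]; ring
  rw [e] at hN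
  have e2 : (4 * k + r + 2) % 4 = (r + 2) % 4 := by omega
  rw [e2]
  clear e e2
  rw [h2] at h3 h4
  rw [h3] at h4
  rw [h1, h0] at h2 h3 h4
  clear h5
  interval_cases r
  · rw [h1, add_zero, h0] at ha
    clear h0 h1 h2 h3 h4
    subst hN ha
    rcases hz with rfl | rfl <;> decide
  · rw [h1, h2] at ha
    clear h0 h1 h2 h3 h4
    subst hN ha
    rcases hz with rfl | rfl <;> decide
  · rw [h2, h3] at ha
    clear h0 h1 h2 h3 h4
    subst hN ha
    rcases hz with rfl | rfl <;> decide
  · rw [h3, h4] at ha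
    clear h0 h1 h2 h3 h4
    subst hN ha
    rcases hz with rfl | rfl <;> decide

lemma regII4 (m : ℕ) (z : ZMod 4) (hz : z = 0 ∨ z = 2) (N a : ZMod 4) (hN : N = m + 2)
    (ha : a = BB (1 + N * z) z (m + 1) - (N - 1) * z * BB (1 + N * z) z m) :
    a = 1 ∨ (a = 3 ∧ (m + 2) % 4 ≠ 0 ∧ (m + 2) % 4 ≠ 1) := by
  obtain ⟨k, r, hr, rfl⟩ : ∃ k r, r < 4 ∧ m = 4 * k + r :=
    ⟨m / 4, m % 4, Nat.mod_lt _ (by norm_num), (Nat.div_add_mod _ _).symm⟩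
  obtain ⟨h0, h1⟩ := BB_per N z hz k
  obtain ⟨h2, h3, h4, h5⟩ := BB_four (1 + N * z) z k
  have e : (((4 * k + r : ℕ)) : ZMod 4) = r := by
    push_cast; rw [show (4 : ZMod 4) = 0 from rfl]; ring
  rw [e] at hN
  have e2 : (4 * k + r + 2) % 4 = (r + 2) % 4 := by omega
  rw [e2]
  clear e e2
  rw [h2] at h3 h4
  rw [h3] at h4
  rw [h1, h0] at h2 h3 h4
  clear h5
  interval_cases r
  · rw [h1, add_zero, h0] at ha
    clear h0 h1 h2 h3 h4
    subst hN ha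
    rcases hz with rfl | rfl <;> decide
  · rw [h1, h2] at ha
    clear h0 h1 h2 h3 h4
    subst hN ha
    rcases hz with rfl | rfl <;> decide
  · rw [h2, h3] at ha
    clear h0 h1 h2 h3 h4
    subst hN ha
    rcases hz with rfl | rfl <;> decide
  · rw [h3, h4] at ha
    clear h0 h1 h2 h3 h4
    subst hN ha
    rcases hz with rfl | rfl <;> decide

/-! ### The middle regime -/

def PQ {R : Type*} [CommRing R] (x : R) : ℕ → R × R
  | 0 => (1, 1)
  | (j + 1) => ((2 * j + 1) * (PQ x j).1 - x * (PQ x j).2,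
      (2 * j + 1) * (PQ x j).1 - x * (PQ x j).2 + (2 * j + 2) * (PQ x j).2)

lemma PQ_map {R S : Type*} [CommRing R] [CommRing S] (ψ : R →+* S) (x : R) (j : ℕ) :
    ψ (PQ x j).1 = (PQ (ψ x) j).1 ∧ ψ (PQ x j).2 = (PQ (ψ x) j).2 := by
  induction j with
  | zero => simp [PQ]
  | succ j ih => simp [PQ, ih.1, ih.2, _root_.map_ofNat]

lemma BB_PQ {R : Type*} [CommRing R] (v w x : R) (h : v ^ 2 = x * w) (j : ℕ) :
    BB v w (2 * j) = (-w) ^ j * (PQ x j).1 ∧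
    BB v w (2 * j + 1) = (-w) ^ j * v * (PQ x j).2 := by
  induction j with
  | zero => simp [BB, PQ]
  | succ j ih =>
    have a2 : BB v w (2 * (j + 1)) =
      v * BB v w (2 * j + 1) - ((2 * j : ℕ) + 1) * w * BB v w (2 * j) := by
      rw [show 2 * (j + 1) = 2 * j + 2 by ring, BB]
    have a3 : BB v w (2 * (j + 1) + 1) =
      v * BB v w (2 * (j + 1)) - ((2 * j + 1 : ℕ) + 1) * w * BB v w (2 * j + 1) := by
      rw [show 2 * (j + 1) + 1 = 2 * j + 1 + 2 by ring, BB]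
      rfl
    have b2 : BB v w (2 * (j + 1)) = (-w) ^ (j + 1) * (PQ x (j + 1)).1 := by
      rw [a2, ih.1, ih.2]
      simp only [PQ]
      push_cast
      linear_combination (-w) ^ j * (PQ x j).2 * h
    refine ⟨b2, ?_⟩
    rw [a3, b2, ih.2]
    simp only [PQ]
    push_cast
    ring

lemma PQ_per (x : ZMod 8) (hx : x = 0 ∨ x = 2) (k : ℕ) : PQ x (4 * k) = (1, 1) := by
  have h8 : (8 : ZMod 8) = 0 := rfl
  induction k with
  | zero => simp [PQ]
  | succ k ih =>
    rw [show 4 * (k + 1) = 4 * k + 1 + 1 + 1 + 1 by ring]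
    simp only [PQ, ih]
    have e : (2 : ZMod 8) * ((4 * k : ℕ) : ZMod 8) = 0 := by
      push_cast; linear_combination (k : ZMod 8) * h8
    push_cast at e ⊢
    simp only [mul_add, e]
    rcases hx with rfl | rfl <;> decide

lemma PQ_vals4 (v : ZMod 8) (hv : v = 6 ∨ v = 4) (k : ℕ) (a : ZMod 8)
    (ha : a = (PQ (2 : ZMod 8) (4 * k + 2)).1 + v * (PQ (2 : ZMod 8) (4 * k + 1)).2) :
    a = 1 ∨ a = 7 := by
  have h8 : (8 : ZMod 8) = 0 := rfl
  have e : (2 : ZMod 8) * ((4 * k : ℕ) : ZMod 8) = 0 := by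
    push_cast; linear_combination (k : ZMod 8) * h8
  have ih := PQ_per 2 (Or.inr rfl) k
  rw [show 4 * k + 2 = 4 * k + 1 + 1 by ring] at ha
  simp only [PQ, ih] at ha
  push_cast at e ha
  simp only [mul_add, e] at ha
  subst ha
  rcases hv with rfl | rfl <;> decide

lemma PQ_vals6 (k : ℕ) (a : ZMod 8)
    (ha : a = (PQ (0 : ZMod 8) (4 * k + 3)).1 + 0 * (PQ (0 : ZMod 8) (4 * k + 2)).2) :
    a = 7 := by
  have h8 : (8 : ZMod 8) = 0 := rfl
  have e : (2 : ZMod 8) * ((4 * k : ℕ) : ZMod 8) = 0 := by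
    push_cast; linear_combination (k : ZMod 8) * h8
  have ih := PQ_per 0 (Or.inl rfl) k
  rw [show 4 * k + 3 = 4 * k + 1 + 1 + 1 by ring] at ha
  simp only [PQ, ih] at ha
  push_cast at e ha
  simp only [mul_add, e] at ha
  subst ha
  decide

/-! ### The constant -/

lemma odd_fac (i : ℕ) : (8 * (2 * i + 1)) ^ (2 * i + 1) =
    2 * (2 * i + 1) * (2 * (8 * (2 * i + 1)) ^ i) ^ 2 := by
  ring

lemma even_fac (i : ℕ) : (8 * (2 * i)) ^ (2 * i) = ((8 * (2 * i)) ^ i) ^ 2 := by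
  rw [← pow_mul]; congr 1; ring

/-- square-class representative of a natural number -/
def SqRep (E g : ℕ) : Prop := ∃ z : ℕ, z ≠ 0 ∧ E = g * z ^ 2

lemma SqRep.odd {i g : ℕ} (h : SqRep (EE (2 * i + 1)) g) :
    SqRep (EE (2 * i + 2)) (2 * (2 * i + 1) * g) := by
  obtain ⟨z, hz, h⟩ := h
  refine ⟨z * (2 * (8 * (2 * i + 1)) ^ i), by positivity, ?_⟩
  rw [EE_succ (2 * i + 1), h, odd_fac]; ring

lemma SqRep.even {i g : ℕ} (h : SqRep (EE (2 * i)) g) (hi : i ≠ 0) : SqRep (EE (2 * i + 1)) g := by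
  obtain ⟨z, hz, h⟩ := h
  refine ⟨z * (8 * (2 * i)) ^ i, by positivity, ?_⟩
  rw [EE_succ (2 * i), h, even_fac]; ring

lemma SqRep.four {E g : ℕ} (h : SqRep E (4 * g)) : SqRep E g := by
  obtain ⟨z, hz, h⟩ := h
  exact ⟨2 * z, by positivity, by rw [h]; ring⟩

lemma rep3 (m : ℕ) : ∃ u, u % 8 = 1 ∧ SqRep (EE (8 * m + 3)) (2 * u) := by
  induction m with
  | zero => exact ⟨1, rfl, 32, by norm_num, by simp [EE, Finset.prod_range_succ]⟩
  | succ m ih =>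
    obtain ⟨u, hu, h⟩ := ih
    have h4 := SqRep.odd (i := 4 * m + 1) (by convert h using 2; ring)
    have h5 := SqRep.even (i := 4 * m + 2) (by convert h4 using 2; ring) (by omega)
    have h6 := SqRep.odd (i := 4 * m + 2) h5
    have h7 := SqRep.even (i := 4 * m + 3) (by convert h6 using 2; ring) (by omega)
    have h8 := SqRep.odd (i := 4 * m + 3) h7
    have h9 := SqRep.even (i := 4 * m + 4) (by convert h8 using 2; ring) (by omega)
    have h10 := SqRep.odd (i := 4 * m + 4) h9
    have h11 := SqRep.even (i := 4 * m + 5) (by convert h10 using 2; ring) (by omega)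
    refine ⟨(8 * m + 3) * (8 * m + 5) * (8 * m + 7) * (8 * m + 9) * u, ?_, ?_⟩
    · have e1 : (8 * m + 3) % 8 = 3 := by omega
      have e2 : (8 * m + 5) % 8 = 5 := by omega
      have e3 : (8 * m + 7) % 8 = 7 := by omega
      have e4 : (8 * m + 9) % 8 = 1 := by omega
      simp [Nat.mul_mod, e1, e2, e3, e4, hu]
    · apply SqRep.four
      apply SqRep.four
      convert h11 using 1
      · congr 1; ring
      · ring

lemma rep4 (m : ℕ) : ∃ u, u % 8 = 3 ∧ SqRep (EE (8 * m + 4)) u := by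
  obtain ⟨u, hu, h⟩ := rep3 m
  have h4 := SqRep.odd (i := 4 * m + 1) (by convert h using 2; ring)
  refine ⟨(8 * m + 3) * u, ?_, ?_⟩
  · have e1 : (8 * m + 3) % 8 = 3 := by omega
    simp [Nat.mul_mod, e1, hu]
  · apply SqRep.four
    convert h4 using 1
    · congr 1; ring
    · ring

lemma rep5 (m : ℕ) : ∃ u, u % 8 = 3 ∧ SqRep (EE (8 * m + 5)) u := by
  obtain ⟨u, hu, h⟩ := rep4 m
  have h4 := SqRep.even (i := 4 * m + 2) (by convert h using 2; ring) (by omega)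
  refine ⟨u, hu, ?_⟩
  convert h4 using 2
  ring

lemma rep6 (m : ℕ) : ∃ u, u % 8 = 7 ∧ SqRep (EE (8 * m + 6)) (2 * u) := by
  obtain ⟨u, hu, h⟩ := rep5 m
  have h4 := SqRep.odd (i := 4 * m + 2) (by convert h using 2; ring)
  refine ⟨(8 * m + 5) * u, ?_, ?_⟩
  · have e1 : (8 * m + 5) % 8 = 5 := by omega
    simp [Nat.mul_mod, e1, hu]
  · convert h4 using 1
    · congr 1; ring
    · ring

lemma rep7 (m : ℕ) : ∃ u, u % 8 = 7 ∧ SqRep (EE (8 * m + 7)) (2 * u) := by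
  obtain ⟨u, hu, h⟩ := rep6 m
  have h4 := SqRep.even (i := 4 * m + 3) (by convert h using 2; ring) (by omega)
  refine ⟨u, hu, ?_⟩
  convert h4 using 2
  ring

/-! ### 2-adic integers -/

noncomputable def ψ4 : ℤ_[2] →+* ZMod 4 := PadicInt.toZModPow 2
noncomputable def ψ8 : ℤ_[2] →+* ZMod 8 := PadicInt.toZModPow 3

lemma coe_ofNat_aux (m : ℕ) [m.AtLeastTwo] :
    (((OfNat.ofNat m : ℤ_[2])) : ℚ_[2]) = OfNat.ofNat m :=
  _root_.map_ofNat (PadicInt.Coe.ringHom (p := 2)) m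

@[push_cast] lemma coe_ofNat_aux2 : (((2 : ℤ_[2])) : ℚ_[2]) = 2 :=
  coe_ofNat_aux 2

@[push_cast] lemma coe_ofNat_aux3 : (((3 : ℤ_[2])) : ℚ_[2]) = 3 :=
  coe_ofNat_aux 3

@[push_cast] lemma coe_ofNat_aux4 : (((4 : ℤ_[2])) : ℚ_[2]) = 4 :=
  coe_ofNat_aux 4

@[push_cast] lemma coe_ofNat_aux6 : (((6 : ℤ_[2])) : ℚ_[2]) = 6 :=
  coe_ofNat_aux 6

@[push_cast] lemma coe_ofNat_aux8 : (((8 : ℤ_[2])) : ℚ_[2]) = 8 :=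
  coe_ofNat_aux 8

lemma sq_int (y s : ℚ_[2]) (g : ℤ_[2]) (hs : s ≠ 0) (h : y ^ 2 = g * s ^ 2) :
    ∃ t : ℤ_[2], t ^ 2 = g := by
  have h1 : (y / s) ^ 2 = g := by rw [div_pow, h]; field_simp
  have h2 : ‖y / s‖ ≤ 1 := by
    have : ‖y / s‖ ^ 2 ≤ 1 := by rw [← norm_pow, h1]; exact g.2
    exact (sq_le_one_iff₀ (norm_nonneg _)).1 this
  refine ⟨⟨y / s, h2⟩, ?_⟩
  apply Subtype.ext
  rw [← h1]
  rfl

lemma unit_or_even (a : ℤ_[2]) : (∃ δ, a * δ = 1) ∨ ∃ b, a = 2 * b := by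
  by_cases h : IsUnit a
  · left; exact h.exists_right_inv
  · right
    have := PadicInt.norm_lt_one_iff_dvd a |>.1 (PadicInt.mem_nonunits.1 h)
    obtain ⟨b, hb⟩ := this
    exact ⟨b, by simpa using hb⟩

lemma odd_unit (n : ℕ) (hn : n % 2 = 1) : ∃ δ : ℤ_[2], (n : ℤ_[2]) * δ = 1 := by
  rcases unit_or_even (n : ℤ_[2]) with h | ⟨b, hb⟩
  · exact h
  · exfalso
    have := congrArg ψ4 hb
    obtain ⟨k, rfl⟩ : ∃ k, n = 2 * k + 1 := ⟨n / 2, by omega⟩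
    simp only [map_mul, map_natCast, map_ofNat] at this
    push_cast at this
    generalize ψ4 b = s at this
    generalize (k : ZMod 4) = r at this
    revert s r
    decide

lemma ψ4_nat (u r : ℕ) (h : u % 4 = r) : ψ4 (u : ℤ_[2]) = r := by
  rw [map_natCast, ← h, ZMod.natCast_mod]

lemma ψ8_nat (u r : ℕ) (h : u % 8 = r) : ψ8 (u : ℤ_[2]) = r := by
  rw [map_natCast, ← h, ZMod.natCast_mod]

lemma ψ4_two_sq (d : ℤ_[2]) : ψ4 (2 * d ^ 2) = 0 ∨ ψ4 (2 * d ^ 2) = 2 := by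
  simp only [map_mul, map_pow, map_ofNat]
  generalize ψ4 d = s
  revert s
  decide

lemma ψ8_unit_sq (e d : ℤ_[2]) (h : e * d = 1) : ψ8 e ^ 2 = 1 := by
  have := congrArg ψ8 h
  simp only [map_mul, map_one] at this
  generalize ψ8 e = s at *
  generalize ψ8 d = t at *
  revert s t
  decide

lemma BB_coe (v w : ℤ_[2]) (m : ℕ) : ((BB v w m : ℤ_[2]) : ℚ_[2]) = BB (v : ℚ_[2]) (w : ℚ_[2]) m :=
  BB_map (PadicInt.Coe.ringHom (p := 2)) v w m

lemma caseI (n : ℕ) (hn : 2 ≤ n) (d : ℤ_[2]) (w : ℚ_[2]) (hd : w * (2 * d ^ 2) = 1) :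
    ∃ A : ℤ_[2], TT n w = w ^ (n - 1) * A ∧
      (ψ4 A = 1 ∨ (ψ4 A = 3 ∧ n % 4 ≠ 1 ∧ n % 4 ≠ 2)) := by
  obtain ⟨m, rfl⟩ : ∃ m, n = m + 2 := ⟨n - 2, by omega⟩
  set z : ℤ_[2] := 2 * d ^ 2 with hz
  set N : ℤ_[2] := ((m + 2 : ℕ) : ℤ_[2]) with hN
  have hd' : w * (z : ℚ_[2]) = 1 := by rw [hz]; push_cast; exact hd
  refine ⟨N * BB (1 + N * z) z (m + 1) - (N - 1) * BB (1 + N * z) z m, ?_, ?_⟩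
  · have e1 : ∀ k, BB (((m + 2 : ℕ) : ℚ_[2]) + w) w k =
        w ^ k * BB (1 + ((m + 2 : ℕ) : ℚ_[2]) * z) (z : ℚ_[2]) k := by
      intro k
      rw [← BB_hom]
      congr 1
      · linear_combination (-((m + 2 : ℕ) : ℚ_[2])) * hd'
      · linear_combination (-w) * hd'
    rw [TT, e1, e1, show m + 2 - 1 = m + 1 by omega]
    have e2 : BB (1 + ((m + 2 : ℕ) : ℚ_[2]) * z) (z : ℚ_[2]) (m + 2) =
      (1 + ((m + 2 : ℕ) : ℚ_[2]) * z) * BB (1 + ((m + 2 : ℕ) : ℚ_[2]) * z) (z : ℚ_[2]) (m + 1)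
      - (m + 1) * z * BB (1 + ((m + 2 : ℕ) : ℚ_[2]) * z) (z : ℚ_[2]) m := by rw [BB]
    rw [e2]
    push_cast [BB_coe, hN]
    set b1 := BB (1 + ((m : ℚ_[2]) + 2) * z) (z : ℚ_[2]) (m + 1)
    set b0 := BB (1 + ((m : ℚ_[2]) + 2) * z) (z : ℚ_[2]) m
    linear_combination w ^ (m + 1) * ((m + 2) * b1 - (m + 1) * b0) * hd'
  · refine regI4 m (ψ4 z) (ψ4_two_sq d) (ψ4 N) _ (by rw [hN, map_natCast]; push_cast; rfl) ?_
    simp [BB_map]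

lemma caseII (n : ℕ) (hn : 2 ≤ n) (d : ℤ_[2]) (w : ℚ_[2]) (hd : w = n ^ 2 * (2 * d ^ 2)) :
    ∃ A : ℤ_[2], TT n w = n ^ n * A ∧
      (ψ4 A = 1 ∨ (ψ4 A = 3 ∧ n % 4 ≠ 0 ∧ n % 4 ≠ 1)) := by
  obtain ⟨m, rfl⟩ : ∃ m, n = m + 2 := ⟨n - 2, by omega⟩
  set z : ℤ_[2] := 2 * d ^ 2 with hz
  set N : ℤ_[2] := ((m + 2 : ℕ) : ℤ_[2]) with hN
  have hd' : w = ((m + 2 : ℕ) : ℚ_[2]) ^ 2 * (z : ℚ_[2]) := by rw [hz]; push_cast at hd ⊢; exact hd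
  refine ⟨BB (1 + N * z) z (m + 1) - (N - 1) * z * BB (1 + N * z) z m, ?_, ?_⟩
  · have e1 : ∀ k, BB (((m + 2 : ℕ) : ℚ_[2]) + w) w k =
        ((m + 2 : ℕ) : ℚ_[2]) ^ k * BB (1 + ((m + 2 : ℕ) : ℚ_[2]) * z) (z : ℚ_[2]) k := by
      intro k
      rw [← BB_hom]
      congr 1
      linear_combination hd'
    rw [TT, e1, e1, show m + 2 - 1 = m + 1 by omega]
    have e2 : BB (1 + ((m + 2 : ℕ) : ℚ_[2]) * z) (z : ℚ_[2]) (m + 2) =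
      (1 + ((m + 2 : ℕ) : ℚ_[2]) * z) * BB (1 + ((m + 2 : ℕ) : ℚ_[2]) * z) (z : ℚ_[2]) (m + 1)
      - (m + 1) * z * BB (1 + ((m + 2 : ℕ) : ℚ_[2]) * z) (z : ℚ_[2]) m := by rw [BB]
    rw [e2, hd']
    push_cast [BB_coe, hN]
    ring
  · refine regII4 m (ψ4 z) (ψ4_two_sq d) (ψ4 N) _ (by rw [hN, map_natCast]; push_cast; rfl) ?_
    simp [BB_map]

lemma caseIII (j : ℕ) (w x : ℤ_[2]) (h : ((2 * j + 2 : ℕ) + w) ^ 2 = x * w) :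
    TT (2 * j + 2) w = (-w : ℚ_[2]) ^ (j + 1) *
      (((PQ x (j + 1)).1 + ((2 * j + 2 : ℕ) + w) * (PQ x j).2 : ℤ_[2]) : ℚ_[2]) := by
  have e1 : TT (2 * j + 2) w = ((BB (((2 * j + 2 : ℕ) : ℤ_[2]) + w) w (2 * (j + 1)) -
      w * BB (((2 * j + 2 : ℕ) : ℤ_[2]) + w) w (2 * j + 1) : ℤ_[2]) : ℚ_[2]) := by
    push_cast [BB_coe, TT]
    rfl
  rw [e1, (BB_PQ _ w x h (j + 1)).1, (BB_PQ _ w x h j).2]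
  push_cast
  ring

lemma coe_inj_eq {a b : ℤ_[2]} (h : a = b) : (a : ℚ_[2]) = b := by rw [h]

lemma split_c (c : ℚ_[2]) : (∃ d : ℤ_[2], c * d = 1) ∨ ∃ b : ℤ_[2], c = 2 * b := by
  by_cases h : ‖c‖ ≤ 1
  · rcases unit_or_even ⟨c, h⟩ with ⟨d, hd⟩ | ⟨b, hb⟩
    · left
      exact ⟨d, by exact coe_inj_eq hd⟩
    · right
      exact ⟨b, by exact coe_inj_eq hb⟩
  · left
    push Not at h
    have hc : c ≠ 0 := by rintro rfl; simp at h; linarith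
    refine ⟨⟨c⁻¹, ?_⟩, ?_⟩
    · rw [norm_inv]; exact inv_le_one_of_one_le₀ h.le
    · exact mul_inv_cancel₀ hc

lemma contra4 (y s : ℚ_[2]) (g : ℤ_[2]) (hs : s ≠ 0) (h : y ^ 2 = g * s ^ 2)
    (hg : ψ4 g = 2 ∨ ψ4 g = 3) : False := by
  obtain ⟨t, ht⟩ := sq_int y s g hs h
  have := congrArg ψ4 ht
  rw [map_pow] at this
  generalize ψ4 g = a at *
  generalize ψ4 t = b at *
  clear h ht
  revert a b
  decide

lemma contra8 (y s : ℚ_[2]) (g : ℤ_[2]) (hs : s ≠ 0) (h : y ^ 2 = g * s ^ 2)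
    (hg : ψ8 g = 3 ∨ ψ8 g = 5 ∨ ψ8 g = 7) : False := by
  obtain ⟨t, ht⟩ := sq_int y s g hs h
  have := congrArg ψ8 ht
  rw [map_pow] at this
  generalize ψ8 g = a at *
  generalize ψ8 t = b at *
  clear h ht
  revert a b
  decide

/-- odd `n`: the two regimes -/
lemma odd_key (n : ℕ) (hn : 2 ≤ n) (hodd : n % 2 = 1) (c w : ℚ_[2]) (hw : c ^ 2 = 2 * w) :
    ∃ (A : ℤ_[2]) (s : ℚ_[2]), s ≠ 0 ∧ TT n w = A * s ^ 2 ∧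
      (ψ4 A = 1 ∨ (ψ4 A = 3 ∧ n % 4 ≠ 1)) := by
  obtain ⟨i, rfl⟩ : ∃ i, n = 2 * i + 1 := ⟨n / 2, by omega⟩
  rcases split_c c with ⟨d, hd⟩ | ⟨b, hb⟩
  · have h1 : w * (2 * d ^ 2) = 1 := by
      linear_combination (-(d : ℚ_[2]) ^ 2) * hw + (c * d + 1) * hd
    obtain ⟨A, hA, h⟩ := caseI _ hn d w h1
    refine ⟨A, w ^ i, pow_ne_zero _ (left_ne_zero_of_mul_eq_one h1), ?_, ?_⟩
    · rw [hA, show 2 * i + 1 - 1 = i * 2 by omega, ← pow_mul]; ring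
    · tauto
  · obtain ⟨δ, hδ⟩ := odd_unit _ hodd
    have hδ' : ((2 * i + 1 : ℕ) : ℚ_[2]) * δ = 1 := by
      have := congrArg (fun t : ℤ_[2] => (t : ℚ_[2])) hδ
      push_cast at this ⊢
      exact this
    have h1 : w = ((2 * i + 1 : ℕ) : ℚ_[2]) ^ 2 * (2 * ((δ * b : ℤ_[2]) : ℚ_[2]) ^ 2) := by
      have : w = 2 * (b : ℚ_[2]) ^ 2 := by
        have h2 : (2 : ℚ_[2]) ≠ 0 := two_ne_zero
        apply mul_left_cancel₀ h2
        rw [← hw, hb]; ring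
      rw [this]
      rw [PadicInt.coe_mul]
      linear_combination (-2 * (b : ℚ_[2]) ^ 2) * (((2 * i + 1 : ℕ) : ℚ_[2]) * δ + 1) * hδ'
    obtain ⟨A, hA, h⟩ := caseII _ hn _ w h1
    have hN : ((2 * i + 1 : ℕ) : ℚ_[2]) ≠ 0 := left_ne_zero_of_mul_eq_one hδ'
    refine ⟨((2 * i + 1 : ℕ) : ℤ_[2]) * A, ((2 * i + 1 : ℕ) : ℚ_[2]) ^ i, pow_ne_zero _ hN, ?_, ?_⟩
    · rw [hA]; push_cast; ring
    · rw [map_mul]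
      have h13 : (2 * i + 1) % 4 = 1 ∨ (2 * i + 1) % 4 = 3 := by omega
      rcases h13 with h' | h' <;> rw [ψ4_nat _ _ h']
      · rcases h with h | ⟨h, h0⟩
        · left; rw [h]; decide
        · tauto
      · rcases h with h | ⟨h, h0⟩
        · right; rw [h]; exact ⟨by decide, by omega⟩
        · left; rw [h]; decide

lemma final_odd2 (n u : ℕ) (hn : 2 ≤ n) (hodd : n % 2 = 1) (hu : u % 2 = 1)
    (hE : SqRep (EE n) (2 * u)) (c w y : ℚ_[2]) (hw : c ^ 2 = 2 * w)
    (h : y ^ 2 = EE n * TT n w) : False := by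
  obtain ⟨z, hz, hE⟩ := hE
  obtain ⟨A, s, hs, hT, hA⟩ := odd_key n hn hodd c w hw
  apply contra4 y (z * s) (2 * u * A) (mul_ne_zero (by exact_mod_cast hz) hs)
  · rw [h, hE, hT]; push_cast; ring
  · left
    have hu' : u % 4 = 1 ∨ u % 4 = 3 := by omega
    have hA' : ψ4 A = 1 ∨ ψ4 A = 3 := by tauto
    rw [map_mul, map_mul, _root_.map_ofNat]
    rcases hu' with h' | h' <;> rw [ψ4_nat _ _ h'] <;>
      rcases hA' with h | h <;> rw [h] <;> decide

lemma final_5 (n u : ℕ) (hn : 2 ≤ n) (hodd : n % 4 = 1) (hu : u % 4 = 3)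
    (hE : SqRep (EE n) u) (c w y : ℚ_[2]) (hw : c ^ 2 = 2 * w)
    (h : y ^ 2 = EE n * TT n w) : False := by
  obtain ⟨z, hz, hE⟩ := hE
  obtain ⟨A, s, hs, hT, hA⟩ := odd_key n hn (by omega) c w hw
  apply contra4 y (z * s) (u * A) (mul_ne_zero (by exact_mod_cast hz) hs)
  · rw [h, hE, hT]; push_cast; ring
  · right
    have hA' : ψ4 A = 1 := by tauto
    rw [map_mul, ψ4_nat _ _ hu, hA']
    decide

lemma w_eq (c w : ℚ_[2]) (hw : c ^ 2 = 2 * w) : w = 2 * (c / 2) ^ 2 := by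
  have h2 : (2 : ℚ_[2]) ≠ 0 := two_ne_zero
  field_simp
  rw [hw]; ring

lemma final_4 (k u : ℕ) (hu : u % 8 = 3)
    (hE : SqRep (EE (8 * k + 4)) u) (c w y : ℚ_[2]) (hw : c ^ 2 = 2 * w)
    (h : y ^ 2 = EE (8 * k + 4) * TT (8 * k + 4) w) : False := by
  obtain ⟨z, hz, hE⟩ := hE
  have hz' : (z : ℚ_[2]) ≠ 0 := by exact_mod_cast hz
  have hu4 : u % 4 = 3 := by omega
  have hwc := w_eq c w hw
  have h8 : (8 : ZMod 8) = 0 := rfl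
  obtain ⟨δ, hδ⟩ := odd_unit (2 * k + 1) (by omega)
  have hδ' := coe_inj_eq hδ
  push_cast at hδ'
  have hn0 : (((8 * k + 4 : ℕ)) : ℚ_[2]) ≠ 0 := by
    have : 8 * k + 4 ≠ 0 := by omega
    exact_mod_cast this
  -- the middle regime
  have key : ∀ (W x : ℤ_[2]), w = W → w ≠ 0 →
      (((2 * (4 * k + 1) + 2 : ℕ) : ℤ_[2]) + W) ^ 2 = x * W → ψ8 x = 2 →
      (ψ8 W = 2 ∨ ψ8 W = 0) → False := by
    intro W x hW hw0 hx hx2 hW2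
    have hT := caseIII (4 * k + 1) W x hx
    obtain ⟨A, hA⟩ : ∃ A, A = (PQ x (4 * k + 1 + 1)).1 + (((2 * (4 * k + 1) + 2 : ℕ) : ℤ_[2]) + W) *
      (PQ x (4 * k + 1)).2 := ⟨_, rfl⟩
    rw [← hA] at hT
    apply contra8 y (z * w ^ (2 * k + 1)) (u * A) (mul_ne_zero hz' (pow_ne_zero _ hw0))
    · rw [h, hE, show 8 * k + 4 = 2 * (4 * k + 1) + 2 by ring, hW, hT]
      rw [show 4 * k + 1 + 1 = 2 * (2 * k + 1) by ring, pow_mul, neg_sq]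
      push_cast; ring
    · have hA8 := congrArg ψ8 hA
      rw [map_add, map_mul, map_add, (PQ_map ψ8 x _).1, (PQ_map ψ8 x _).2, hx2,
        ψ8_nat _ 4 (by omega)] at hA8
      have := PQ_vals4 (((4 : ℕ) : ZMod 8) + ψ8 W)
        (by rcases hW2 with h | h <;> rw [h] <;> decide) k _ hA8
      rw [map_mul, ψ8_nat _ _ hu]
      rcases this with h | h <;> rw [h] <;> decide
  rcases split_c c with ⟨d, hd⟩ | ⟨b, hb⟩
  · -- large
    have h1 : w * (2 * d ^ 2) = 1 := by
      linear_combination (-(d : ℚ_[2]) ^ 2) * hw + (c * d + 1) * hd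
    obtain ⟨A, hA, h'⟩ := caseI (8 * k + 4) (by omega) d w h1
    have hc0 : c ≠ 0 := left_ne_zero_of_mul_eq_one hd
    apply contra4 y (z * w ^ (4 * k + 1) * (c / 2)) (2 * u * A)
      (mul_ne_zero (mul_ne_zero hz' (pow_ne_zero _ (left_ne_zero_of_mul_eq_one h1)))
        (div_ne_zero hc0 two_ne_zero))
    · rw [h, hE, hA, show 8 * k + 4 - 1 = (4 * k + 1) * 2 + 1 by omega, pow_succ w, pow_mul]
      push_cast
      linear_combination (u * z ^ 2 * (w ^ (4 * k + 1)) ^ 2 * A) * hwc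
    · left
      have hA' : ψ4 A = 1 ∨ ψ4 A = 3 := by tauto
      rw [map_mul, map_mul, _root_.map_ofNat, ψ4_nat _ _ hu4]
      rcases hA' with h | h <;> rw [h] <;> decide
  · rcases unit_or_even b with ⟨e, he⟩ | ⟨b2, hb2⟩
    · -- c = 2 * unit
      have hb0 : (b : ℚ_[2]) ≠ 0 := by
        have := coe_inj_eq he
        push_cast at this
        exact left_ne_zero_of_mul_eq_one this
      have hww : w = ((2 * b ^ 2 : ℤ_[2]) : ℚ_[2]) := by
        rw [hwc, hb]; push_cast; field_simp
      have hbs := ψ8_unit_sq b e he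
      refine key (2 * b ^ 2) (8 * (2 * k + 1) ^ 2 * e ^ 2 + 2 * (8 * k + 4) + 2 * b ^ 2) hww ?_ ?_ ?_ ?_
      · rw [hww]; push_cast; exact mul_ne_zero two_ne_zero (pow_ne_zero _ hb0)
      · push_cast
        linear_combination (-16 * (2 * k + 1) ^ 2) * (b * e + 1) * he
      · simp only [map_add, map_mul, map_pow, _root_.map_ofNat, map_natCast, hbs, h8]
        generalize (k : ZMod 8) = r
        generalize ψ8 e = t
        rw [map_one]
        revert r t
        decide
      · left
        simp only [map_mul, map_pow, _root_.map_ofNat, hbs]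
        decide
    · rcases unit_or_even b2 with ⟨e, he⟩ | ⟨b3, hb3⟩
      · -- c = 4 * unit
        have hb0 : (b2 : ℚ_[2]) ≠ 0 := by
          have := coe_inj_eq he
          push_cast at this
          exact left_ne_zero_of_mul_eq_one this
        have hww : w = ((8 * b2 ^ 2 : ℤ_[2]) : ℚ_[2]) := by
          rw [hwc, hb, hb2]; push_cast; field_simp; ring
        have hbs := ψ8_unit_sq e b2 (by rw [mul_comm]; exact he)
        have hns : (((2 * k + 1 : ℕ) : ZMod 8)) ^ 2 = 1 := by
          have := ψ8_unit_sq _ _ hδ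
          rwa [map_natCast] at this
        refine key (8 * b2 ^ 2)
          (2 * ((2 * k + 1 : ℕ) : ℤ_[2]) ^ 2 * e ^ 2 + 2 * (8 * k + 4) + 8 * b2 ^ 2) hww ?_ ?_ ?_ ?_
        · rw [hww]; push_cast
          exact mul_ne_zero (by norm_num) (pow_ne_zero _ hb0)
        · push_cast
          linear_combination (-16 * (2 * k + 1) ^ 2) * (b2 * e + 1) * he
        · simp only [map_add, map_mul, map_pow, _root_.map_ofNat, map_natCast, hbs, h8, hns]
          generalize (k : ZMod 8) = r
          generalize ψ8 b2 = t
          revert r t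
          decide
        · right
          simp only [map_mul, _root_.map_ofNat, h8, zero_mul]
      · -- small
        have h1 : w = ((8 * k + 4 : ℕ) : ℚ_[2]) ^ 2 * (2 * ((δ * b3 : ℤ_[2]) : ℚ_[2]) ^ 2) := by
          rw [hwc, hb, hb2, hb3]
          push_cast
          field_simp
          linear_combination (-16 * (b3 : ℚ_[2]) ^ 2) * ((2 * k + 1) * δ + 1) * hδ'
        obtain ⟨A, hA, h'⟩ := caseII (8 * k + 4) (by omega) _ w h1
        apply contra4 y (z * ((8 * k + 4 : ℕ) : ℚ_[2]) ^ (4 * k + 2)) (u * A)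
          (mul_ne_zero hz' (pow_ne_zero _ hn0))
        · rw [h, hE, hA]
          have : ((8 * k + 4 : ℕ) : ℚ_[2]) ^ (8 * k + 4) =
            (((8 * k + 4 : ℕ) : ℚ_[2]) ^ (4 * k + 2)) ^ 2 := by
            rw [← pow_mul]; congr 1; ring
          rw [this]
          push_cast
          ring
        · right
          have hA' : ψ4 A = 1 := by
            rcases h' with h | ⟨h, h1, h2⟩
            · exact h
            · omega
          rw [map_mul, ψ4_nat _ _ hu4, hA']
          decide

lemma final_6 (k u : ℕ) (hu : u % 8 = 7)
    (hE : SqRep (EE (8 * k + 6)) (2 * u)) (c w y : ℚ_[2]) (hw : c ^ 2 = 2 * w)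
    (h : y ^ 2 = EE (8 * k + 6) * TT (8 * k + 6) w) : False := by
  obtain ⟨z, hz, hE⟩ := hE
  have hz' : (z : ℚ_[2]) ≠ 0 := by exact_mod_cast hz
  have hu4 : u % 4 = 3 := by omega
  have hwc := w_eq c w hw
  have h8 : (8 : ZMod 8) = 0 := rfl
  obtain ⟨δ, hδ⟩ := odd_unit (4 * k + 3) (by omega)
  have hδ' := coe_inj_eq hδ
  push_cast at hδ'
  have hn0 : (((8 * k + 6 : ℕ)) : ℚ_[2]) ≠ 0 := by
    have : 8 * k + 6 ≠ 0 := by omega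
    exact_mod_cast this
  rcases split_c c with ⟨d, hd⟩ | ⟨b, hb⟩
  · -- large
    have h1 : w * (2 * d ^ 2) = 1 := by
      linear_combination (-(d : ℚ_[2]) ^ 2) * hw + (c * d + 1) * hd
    obtain ⟨A, hA, h'⟩ := caseI (8 * k + 6) (by omega) d w h1
    have hc0 : c ≠ 0 := left_ne_zero_of_mul_eq_one hd
    apply contra4 y (z * w ^ (4 * k + 2) * c) (u * A)
      (mul_ne_zero (mul_ne_zero hz' (pow_ne_zero _ (left_ne_zero_of_mul_eq_one h1))) hc0)
    · rw [h, hE, hA, show 8 * k + 6 - 1 = (4 * k + 2) * 2 + 1 by omega, pow_succ w, pow_mul]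
      push_cast
      linear_combination (-u * z ^ 2 * (w ^ (4 * k + 2)) ^ 2 * A) * hw
    · right
      have hA' : ψ4 A = 1 := by
        rcases h' with h | ⟨h, h1, h2⟩
        · exact h
        · omega
      rw [map_mul, ψ4_nat _ _ hu4, hA']
      decide
  · rcases unit_or_even b with ⟨e, he⟩ | ⟨b2, hb2⟩
    · -- c = 2 * unit
      have hb0 : (b : ℚ_[2]) ≠ 0 := by
        have := coe_inj_eq he
        push_cast at this
        exact left_ne_zero_of_mul_eq_one this
      have hww : w = ((2 * b ^ 2 : ℤ_[2]) : ℚ_[2]) := by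
        rw [hwc, hb]; push_cast; field_simp
      have hw0 : w ≠ 0 := by
        rw [hww]; push_cast; exact mul_ne_zero two_ne_zero (pow_ne_zero _ hb0)
      have hbs := ψ8_unit_sq b e he
      have hes := ψ8_unit_sq e b (by rw [mul_comm]; exact he)
      have hns : (((4 * k + 3 : ℕ) : ZMod 8)) ^ 2 = 1 := by
        have := ψ8_unit_sq _ _ hδ
        rwa [map_natCast] at this
      set x : ℤ_[2] := 2 * ((4 * k + 3 : ℕ) : ℤ_[2]) ^ 2 * e ^ 2 + 2 * (8 * k + 6) + 2 * b ^ 2 with hxd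
      set W : ℤ_[2] := 2 * b ^ 2 with hWd
      have hx : (((2 * (4 * k + 2) + 2 : ℕ) : ℤ_[2]) + W) ^ 2 = x * W := by
        rw [hxd, hWd]
        push_cast
        linear_combination (-4 * (4 * k + 3) ^ 2) * (b * e + 1) * he
      have hx8 : ψ8 x = 0 := by
        rw [hxd, hWd]
        simp only [map_add, map_mul, map_pow, _root_.map_ofNat, map_natCast, hbs, h8, hns, hes]
        generalize (k : ZMod 8) = r
        revert r
        decide
      have hW8 : ψ8 W = 2 := by
        rw [hWd]
        simp only [map_mul, map_pow, _root_.map_ofNat, hbs]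
        decide
      have hT := caseIII (4 * k + 2) W x hx
      obtain ⟨A, hA⟩ : ∃ A, A = (PQ x (4 * k + 2 + 1)).1 +
        (((2 * (4 * k + 2) + 2 : ℕ) : ℤ_[2]) + W) * (PQ x (4 * k + 2)).2 := ⟨_, rfl⟩
      rw [← hA] at hT
      apply contra8 y (z * w ^ (2 * k + 1) * c) (-(u * A))
        (mul_ne_zero (mul_ne_zero hz' (pow_ne_zero _ hw0)) (by
          rw [hb]; exact mul_ne_zero two_ne_zero hb0))
      · rw [h, hE, show 8 * k + 6 = 2 * (4 * k + 2) + 2 by ring, hww, hT, ← hww]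
        rw [show 4 * k + 2 + 1 = 2 * (2 * k + 1) + 1 by ring, pow_succ (-w), pow_mul, neg_sq]
        push_cast
        linear_combination (u * z ^ 2 * (w ^ (2 * k + 1)) ^ 2 * A) * hw
      · have hA8 := congrArg ψ8 hA
        rw [map_add, map_mul, map_add, (PQ_map ψ8 x _).1, (PQ_map ψ8 x _).2, hx8,
          ψ8_nat _ 6 (by omega), hW8, show ((6 : ℕ) : ZMod 8) + 2 = 0 from rfl] at hA8
        have := PQ_vals6 k _ hA8
        rw [map_neg, map_mul, ψ8_nat _ _ hu, this]
        decide
    · -- small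
      have h1 : w = ((8 * k + 6 : ℕ) : ℚ_[2]) ^ 2 * (2 * ((δ * b2 : ℤ_[2]) : ℚ_[2]) ^ 2) := by
        rw [hwc, hb, hb2]
        push_cast
        field_simp
        linear_combination (-4 * (b2 : ℚ_[2]) ^ 2) * ((4 * k + 3) * δ + 1) * hδ'
      obtain ⟨A, hA, h'⟩ := caseII (8 * k + 6) (by omega) _ w h1
      apply contra4 y (z * ((8 * k + 6 : ℕ) : ℚ_[2]) ^ (4 * k + 3)) (2 * u * A)
        (mul_ne_zero hz' (pow_ne_zero _ hn0))
      · rw [h, hE, hA]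
        have : ((8 * k + 6 : ℕ) : ℚ_[2]) ^ (8 * k + 6) =
          (((8 * k + 6 : ℕ) : ℚ_[2]) ^ (4 * k + 3)) ^ 2 := by
          rw [← pow_mul]; congr 1; ring
        rw [this]
        push_cast
        ring
      · left
        have hA' : ψ4 A = 1 ∨ ψ4 A = 3 := by tauto
        rw [map_mul, map_mul, _root_.map_ofNat, ψ4_nat _ _ hu4]
        rcases hA' with h | h <;> rw [h] <;> decide

theorem stmt_18 (n : ℕ) (hmod : n % 8 = 3 ∨ n % 8 = 4 ∨ n % 8 = 5 ∨
    n % 8 = 6 ∨ n % 8 = 7) (c : ℚ_[2]) :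
    ¬ ∃ y : ℚ_[2],
      algebraMap ℚ_[2] K y ^ 2 =
        disc ((H n + C c * H (n - 1)).map (algebraMap ℚ_[2] K)) := by
  rintro ⟨y, hy⟩
  have hw : c ^ 2 = 2 * (c ^ 2 / 2) := by field_simp
  rw [disc_formula n (by omega) c _ hw, ← map_pow] at hy
  have h := (algebraMap ℚ_[2] K).injective hy
  obtain ⟨k, r, hr, rfl⟩ : ∃ k r, r = n % 8 ∧ n = 8 * k + r :=
    ⟨n / 8, n % 8, rfl, (Nat.div_add_mod _ _).symm⟩
  rw [← hr] at hmod
  rcases hmod with rfl | rfl | rfl | rfl | rfl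
  · obtain ⟨u, hu, hE⟩ := rep3 k
    exact final_odd2 _ u (by omega) (by omega) (by omega) hE c _ y hw h
  · obtain ⟨u, hu, hE⟩ := rep4 k
    exact final_4 k u hu hE c _ y hw h
  · obtain ⟨u, hu, hE⟩ := rep5 k
    exact final_5 _ u (by omega) (by omega) (by omega) hE c _ y hw h
  · obtain ⟨u, hu, hE⟩ := rep6 k
    exact final_6 k u hu hE c _ y hw h
  · obtain ⟨u, hu, hE⟩ := rep7 k
    exact final_odd2 _ u (by omega) (by omega) (by omega) hE c _ y hw h
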